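/- Let N ∈ ℕ, m ∈ ℕ₀, α, c ∈ ℂ, c ≠ ±1, with all recurrence coefficients well-defined. Then the big -1 Jacobi polynomials factorize as Q_{2N+1+m}(x; α, -2N-1, c) = (x²-c²)^N (x+c) · Q_m(x; α, 2N+1, -c), where Q_n(x; α, β, c) are the monic polynomials generated by the three-term recurrence. -/

import Mathlib

open Polynomial Finset

/-- Diagonal recurrence coefficient `b_n(α,β,c)` of the monic big `-1` Jacobi polynomials. -/
noncomputable def bcoef (α β c : ℂ) (n : ℕ) : ℂ :=
  if Even n then
    -c + (c - 1) * n / (α + β + 2 * n) + (c + 1) * (β + n + 1) / (α + β + 2 * n + 2)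
  else
    c - (c - 1) * (n + 1) / (α + β + 2 * n + 2) - (c + 1) * (β + n) / (α + β + 2 * n)

/-- Subdiagonal recurrence coefficient `u_n(α,β,c)` of the monic big `-1` Jacobi polynomials. -/
noncomputable def ucoef (α β c : ℂ) (n : ℕ) : ℂ :=
  if Even n then (c - 1) ^ 2 * n * (α + β + n) / (α + β + 2 * n) ^ 2
  else (c + 1) ^ 2 * (α + n) * (β + n) / (α + β + 2 * n) ^ 2

/-- Monic big `-1` Jacobi polynomials: `Q₀ = 1`, `Q_{n+1} = (X - b_n) Q_n - u_n Q_{n-1}`. -/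
noncomputable def bigQ (α β c : ℂ) : ℕ → Polynomial ℂ
  | 0 => 1
  | 1 => X - C (bcoef α β c 0)
  | (n + 2) => (X - C (bcoef α β c (n + 1))) * bigQ α β c (n + 1)
      - C (ucoef α β c (n + 1)) * bigQ α β c n


/-- eigenvalues -/
noncomputable def lamQ (s : ℂ) (n : ℕ) : ℂ := if Even n then n else -(s + n + 1)

/-- off-diagonal coefficients -/
noncomputable def xiQ (β c : ℂ) (j : ℕ) : ℂ :=
  if Even j then (c + 1) * (β + j + 1) else (c - 1) * (j + 1)

/-- expansion coefficients -/
noncomputable def AQ (s β c : ℂ) (n k : ℕ) : ℂ :=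
  if k ≤ n then ∏ j ∈ Finset.Ico k n, xiQ β c j / (lamQ s n - lamQ s j) else 0

/-- ratio of consecutive expansion coefficients -/
noncomputable def gQ (s β c : ℂ) (n k : ℕ) : ℂ :=
  (if Even n then 1 else -1) * (xiQ β c n / (s + 2 * n + 2)) *
    (if Even (n + k) then -1 else (s + n + k + 1) / (n - k + 1))

/-- basis -/
noncomputable def phiQ (c : ℂ) : ℕ → Polynomial ℂ
  | 0 => 1
  | (n + 1) => (X + C (if Even n then c else -c)) * phiQ c n

lemma AQ_self (s β c : ℂ) (n : ℕ) : AQ s β c n n = 1 := by simp [AQ]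

lemma AQ_gt (s β c : ℂ) (n k : ℕ) (h : n < k) : AQ s β c n k = 0 := by
  simp [AQ, h]

lemma AQ_step (s β c : ℂ) (n k : ℕ) (h : k < n) :
    AQ s β c n k = xiQ β c k / (lamQ s n - lamQ s k) * AQ s β c n (k + 1) := by
  have h1 : k + 1 ≤ n := h
  simp only [AQ, h.le, h1, if_true]
  rw [Finset.prod_eq_prod_Ico_succ_bot h]

lemma lam_sub_ne (s : ℂ) (hs : ∀ n : ℕ, s + 2 * n ≠ 0) (n k : ℕ) (h : n ≠ k) :
    lamQ s n - lamQ s k ≠ 0 := by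
  have hnk : (n : ℂ) - k ≠ 0 := by
    rw [sub_ne_zero]; exact_mod_cast h
  by_cases hn : Even n <;> by_cases hk : Even k <;> simp only [lamQ, hn, hk, if_true, if_false]
  · exact hnk
  · have : Even (n + k + 1) := by grind
    obtain ⟨r, hr⟩ := this
    have := hs r
    have h2 : (n : ℂ) + k + 1 = r + r := by exact_mod_cast hr
    intro h0; apply this; linear_combination h0 - h2
  · have : Even (n + k + 1) := by grind
    obtain ⟨r, hr⟩ := this
    have := hs r
    have h2 : (n : ℂ) + k + 1 = r + r := by exact_mod_cast hr
    intro h0; apply this; linear_combination -h0 - h2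
  · intro h0; apply hnk; linear_combination -h0

lemma gQ_rel (s β c : ℂ) (n k : ℕ) (h : k < n) :
    gQ s β c n (k + 1) * (lamQ s n - lamQ s k)
      = gQ s β c n k * (lamQ s (n + 1) - lamQ s k) := by
  have hnk : (n : ℂ) - k ≠ 0 := by
    rw [sub_ne_zero]; exact_mod_cast h.ne'
  have hnk1 : (n : ℂ) - k + 1 ≠ 0 := by
    intro h0
    have : ((n + 1 : ℕ) : ℂ) = k := by push_cast; linear_combination h0
    have : n + 1 = k := by exact_mod_cast this
    omega
  have hnk' : (n : ℂ) - (k + 1) + 1 ≠ 0 := by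
    intro h0; apply hnk; linear_combination h0
  unfold gQ
  generalize xiQ β c n / (s + 2 * n + 2) = t
  by_cases hn : Even n <;> by_cases hk : Even k <;>
    simp only [lamQ, hn, hk, ← add_assoc, Nat.even_add_one, Nat.even_add, if_true, if_false, not_true_eq_false, not_false_eq_true, iff_true, iff_false, true_iff, false_iff] <;>
    push_cast <;> field_simp <;> ring

lemma AQ_rel (s β c : ℂ) (hs : ∀ n : ℕ, s + 2 * n ≠ 0) (n k : ℕ) (h : k ≤ n) :
    AQ s β c (n + 1) k = gQ s β c n k * AQ s β c n k := by
  induction h using Nat.decreasingInduction with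
  | self =>
    rw [AQ_step _ _ _ _ _ (Nat.lt_succ_self n), AQ_self, AQ_self]
    have h1 := hs (n + 1)
    have h1 : s + 2 * n + 2 ≠ 0 := by
      intro h0; apply h1; push_cast; linear_combination h0
    have h2 := lam_sub_ne s hs (n + 1) n (by omega)
    have h3 : Even (n + n) := ⟨n, rfl⟩
    rw [mul_one, mul_one, div_eq_iff h2]
    unfold gQ
    by_cases hn : Even n <;>
      simp only [lamQ, hn, h3, Nat.even_add_one, if_true, if_false, not_true_eq_false, not_false_eq_true] <;>
      push_cast <;> field_simp <;> ring
  | of_succ k hk ih =>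
    have hk : k < n := hk
    rw [AQ_step _ _ _ _ _ (by omega : k < n + 1), AQ_step _ _ _ n k hk, ih]
    have h1 := lam_sub_ne s hs (n + 1) k (by omega)
    have h2 := lam_sub_ne s hs n k (by omega)
    have := gQ_rel s β c n k hk
    field_simp
    linear_combination xiQ β c k * AQ s β c n (k + 1) * this

lemma bQ_top (α β c : ℂ) (hs : ∀ n : ℕ, α + β + 2 * n ≠ 0) (n : ℕ) :
    AQ (α + β) β c (n + 2) (n + 1) = AQ (α + β) β c (n + 1) n
      + (if Even n then c else -c) - bcoef α β c (n + 1) := by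
  have h1 : α + β + 2 * (n + 1) ≠ 0 := by simpa using hs (n + 1)
  have h2 : α + β + 2 * (n + 2) ≠ 0 := by simpa using hs (n + 2)
  have h1' : α + β + 2 * n + 2 ≠ 0 := by intro h; apply h1; linear_combination h
  have h2' : α + β + 2 * (n + 1) + 2 ≠ 0 := by intro h; apply h2; linear_combination h
  rw [AQ_rel _ _ _ hs (n+1) (n+1) le_rfl, AQ_rel _ _ _ hs n n le_rfl, AQ_self, AQ_self]
  have h3 : Even (n + n) := ⟨n, rfl⟩
  have h4 : Even (n + 1 + (n + 1)) := ⟨n + 1, rfl⟩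
  unfold gQ bcoef xiQ
  by_cases hn : Even n <;>
    simp only [hn, h3, h4, Nat.even_add_one, if_true, if_false, not_true_eq_false, not_false_eq_true] <;>
    push_cast <;> field_simp <;> ring

lemma bQ_zero (α β c : ℂ) (hs : ∀ n : ℕ, α + β + 2 * n ≠ 0) :
    AQ (α + β) β c 1 0 = - c - bcoef α β c 0 := by
  have h1 : α + β + 2 ≠ 0 := by simpa using hs 1
  rw [AQ_rel _ _ _ hs 0 0 le_rfl, AQ_self]
  unfold gQ bcoef xiQ
  simp

/-- recurrence with the previous-column coefficient eliminated -/
lemma core (α β c : ℂ) (hs : ∀ n : ℕ, α + β + 2 * n ≠ 0) (n k : ℕ) (h : k ≤ n) :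
    gQ (α + β) β c (n + 1) k * gQ (α + β) β c n k
      = (if k = 0 then 0 else xiQ β c (k - 1) / (lamQ (α + β) (n + 1) - lamQ (α + β) (k - 1)))
          * gQ (α + β) β c n k
        + ((if Even k then -c else c) - bcoef α β c (n + 1)) * gQ (α + β) β c n k
        - ucoef α β c (n + 1) := by
  have h1 : α + β + 2 * (n + 1) ≠ 0 := by simpa using hs (n + 1)
  have h2 : α + β + 2 * (n + 2) ≠ 0 := by simpa using hs (n + 2)
  have h1' : α + β + 2 * n + 2 ≠ 0 := by intro h; apply h1; linear_combination h
  have h2' : α + β + 2 * (n + 1) + 2 ≠ 0 := by intro h; apply h2; linear_combination h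
  obtain ⟨D, hD⟩ : ∃ D, D = α + β + 2 * n + 2 := ⟨_, rfl⟩
  have d0 : α + β + 2 * n + 2 = D := hD.symm
  have d1 : α + β + 2 * (n + 1) = D := by rw [hD]; ring
  have hα : α = D - β - 2 * n - 2 := by rw [hD]; ring
  rw [d0] at h1'
  rw [d1] at h2'
  have hnk1 : (n : ℂ) - k + 1 ≠ 0 := by
    intro h0
    have : ((n + 1 : ℕ) : ℂ) = k := by push_cast; linear_combination h0
    have : n + 1 = k := by exact_mod_cast this
    omega
  have hnk2 : (n : ℂ) + 1 - k + 1 ≠ 0 := by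
    intro h0
    have : ((n + 2 : ℕ) : ℂ) = k := by push_cast; linear_combination h0
    have : n + 2 = k := by exact_mod_cast this
    omega
  rcases k with _ | k
  · unfold gQ bcoef ucoef xiQ
    have hn1 : (n : ℂ) + 1 ≠ 0 := by simpa using hnk1
    have hn2 : (n : ℂ) + 1 + 1 ≠ 0 := by simpa using hnk2
    by_cases hn : Even n <;>
    simp only [hn, add_zero, sub_zero, Nat.cast_zero, Even.zero, Nat.even_add_one, if_true, if_false, not_true_eq_false, not_false_eq_true] <;>
    push_cast <;> simp only [d0, d1] <;> field_simp <;> rw [hα] <;> ring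
  · have h3 := lam_sub_ne (α + β) hs (n + 1) k (by omega)
    push_cast at hnk1 hnk2
    simp only [Nat.add_sub_cancel, Nat.succ_ne_zero, if_false]
    unfold gQ bcoef ucoef xiQ
    unfold lamQ at h3 ⊢
    by_cases hn : Even n <;> by_cases hk : Even k <;>
    simp only [hn, hk, ← add_assoc, Nat.even_add_one, Nat.even_add, if_true, if_false, not_true_eq_false, not_false_eq_true, iff_true, iff_false, true_iff, false_iff] at h3 ⊢ <;>
    push_cast at h3 ⊢ <;> simp only [d0, d1] <;> field_simp <;> rw [hα] <;> ring

lemma AQ_rec (α β c : ℂ) (hs : ∀ n : ℕ, α + β + 2 * n ≠ 0) (n k : ℕ) (h : k ≤ n + 2) :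
    AQ (α + β) β c (n + 2) k = (if k = 0 then 0 else AQ (α + β) β c (n + 1) (k - 1))
      + ((if Even k then -c else c) - bcoef α β c (n + 1)) * AQ (α + β) β c (n + 1) k
      - ucoef α β c (n + 1) * AQ (α + β) β c n k := by
  rcases (by omega : k = n + 2 ∨ k = n + 1 ∨ k ≤ n) with rfl | rfl | h
  · simp [AQ_self, AQ_gt]
  · rw [bQ_top α β c hs, AQ_self, AQ_gt _ _ _ n (n+1) (by omega)]
    by_cases hn : Even n <;> simp [hn, Nat.even_add_one] <;> ring
  · have e1 := AQ_rel _ β c hs (n + 1) k (by omega)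
    have e2 := AQ_rel _ β c hs n k h
    have e3 := core α β c hs n k h
    rcases k with _ | k
    · simp only [if_true] at e3 ⊢
      rw [e1, e2]
      linear_combination AQ (α + β) β c n 0 * e3
    · have e4 := AQ_step (α + β) β c (n + 1) k (by omega)
      simp only [Nat.add_sub_cancel, Nat.succ_ne_zero, if_false] at e3 ⊢
      rw [e4, e1, e2]
      linear_combination AQ (α + β) β c n (k + 1) * e3

lemma X_phi (c : ℂ) (k : ℕ) :
    X * phiQ c k = phiQ c (k + 1) + C (if Even k then -c else c) * phiQ c k := by
  rw [phiQ]
  split_ifs <;> simp <;> ring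

lemma bigQ_expand (α β c : ℂ) (hs : ∀ n : ℕ, α + β + 2 * n ≠ 0) (n : ℕ) :
    ∀ M, n < M → bigQ α β c n = ∑ k ∈ Finset.range M, C (AQ (α + β) β c n k) * phiQ c k := by
  suffices H : bigQ α β c n = ∑ k ∈ Finset.range (n + 1), C (AQ (α + β) β c n k) * phiQ c k by
    intro M hM
    rw [H]
    apply Finset.sum_subset
    · intro x; simp; omega
    · intro x _ hx
      rw [AQ_gt _ _ _ _ _ (by simpa using hx)]; simp
  induction n using Nat.strong_induction_on with
  | _ n ih =>
    have ext : ∀ i < n, ∀ M, i < M →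
        bigQ α β c i = ∑ k ∈ Finset.range M, C (AQ (α + β) β c i k) * phiQ c k := by
      intro i hi M hM
      rw [ih i hi]
      apply Finset.sum_subset
      · intro x; simp; omega
      · intro x _ hx
        rw [AQ_gt _ _ _ _ _ (by simpa using hx)]; simp
    match n, ih, ext with
    | 0, _, _ => simp [bigQ, AQ_self, phiQ]
    | 1, _, _ =>
      simp [Finset.sum_range_succ, bigQ, AQ_self, phiQ, bQ_zero α β c hs]
      ring
    | n + 2, _, ext =>
      have key : X * bigQ α β c (n + 1) = ∑ k ∈ Finset.range (n + 3),
          (C (if k = 0 then 0 else AQ (α + β) β c (n + 1) (k - 1)) * phiQ c k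
          + C (if Even k then -c else c) * (C (AQ (α + β) β c (n + 1) k) * phiQ c k)) := by
        rw [Finset.sum_add_distrib, Finset.sum_range_succ', Finset.sum_range_succ (n := n + 2),
          AQ_gt _ _ _ (n + 1) (n + 2) (by omega), ext (n + 1) (by omega) (n + 2) (by omega),
          Finset.mul_sum]
        simp only [Nat.add_sub_cancel, Nat.succ_ne_zero, if_false, if_true, C_0, zero_mul,
          add_zero, mul_zero]
        rw [← Finset.sum_add_distrib]
        refine Finset.sum_congr rfl fun k _ => ?_
        linear_combination C (AQ (α + β) β c (n + 1) k) * X_phi c k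
      rw [bigQ, sub_mul, key, ext (n + 1) (by omega) (n + 3) (by omega),
        ext n (by omega) (n + 3) (by omega), Finset.mul_sum, Finset.mul_sum,
        ← Finset.sum_sub_distrib, ← Finset.sum_sub_distrib]
      refine Finset.sum_congr rfl fun k hk => ?_
      rw [AQ_rec α β c hs n k (by simp at hk; omega)]
      simp only [C_add, C_sub, C_mul]
      ring

lemma phi_odd (c : ℂ) (N : ℕ) :
    phiQ c (2 * N) = (X ^ 2 - C (c ^ 2)) ^ N ∧
    phiQ c (2 * N + 1) = (X ^ 2 - C (c ^ 2)) ^ N * (X + C c) := by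
  have h : ∀ N, phiQ c (2 * N) = (X ^ 2 - C (c ^ 2)) ^ N := by
    intro N
    induction N with
    | zero => simp [phiQ]
    | succ N ih =>
      rw [show 2 * (N + 1) = 2 * N + 1 + 1 by ring, phiQ, phiQ, ih]
      simp [Nat.even_add_one]
      ring
  refine ⟨h N, ?_⟩
  rw [phiQ, h]
  simp
  ring

lemma bigQ_base (N : ℕ) (α c : ℂ)
    (hs : ∀ n : ℕ, α + (-2 * (N : ℂ) - 1) + 2 * n ≠ 0) :
    bigQ α (-2 * (N : ℂ) - 1) c (2 * N + 1) = (X ^ 2 - C (c ^ 2)) ^ N * (X + C c) := by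
  rw [bigQ_expand _ _ _ hs _ (2 * N + 2) (by omega), Finset.sum_range_succ, AQ_self,
    Finset.sum_eq_zero, (phi_odd c N).2]
  · simp
  · intro k hk
    have hk : k < 2 * N + 1 := by simpa using hk
    rw [AQ_rel _ _ _ hs _ _ (by omega)]
    have : xiQ (-2 * (N : ℂ) - 1) c (2 * N) = 0 := by
      simp only [xiQ, even_two_mul, if_true]
      push_cast
      ring
    have g0 : gQ (α + (-2 * (N : ℂ) - 1)) (-2 * (N : ℂ) - 1) c (2 * N) k = 0 := by
      rw [gQ, this]
      ring
    rw [g0]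
    simp

lemma b_shift (N m : ℕ) (α c : ℂ) :
    bcoef α (-2 * (N : ℂ) - 1) c (2 * N + 1 + m) = bcoef α (2 * (N : ℂ) + 1) (-c) m := by
  unfold bcoef
  have e1 : α + (-2 * (N : ℂ) - 1) + 2 * ((2 * N + 1 + m : ℕ) : ℂ)
    = α + (2 * (N : ℂ) + 1) + 2 * m := by push_cast; ring
  rw [e1]
  by_cases hm : Even m <;> simp [hm, Nat.even_add, Nat.even_add_one] <;> ring

lemma u_shift (N m : ℕ) (α c : ℂ) :
    ucoef α (-2 * (N : ℂ) - 1) c (2 * N + 1 + m) = ucoef α (2 * (N : ℂ) + 1) (-c) m := by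
  unfold ucoef
  have e1 : α + (-2 * (N : ℂ) - 1) + 2 * ((2 * N + 1 + m : ℕ) : ℂ)
    = α + (2 * (N : ℂ) + 1) + 2 * m := by push_cast; ring
  rw [e1]
  by_cases hm : Even m <;> simp [hm, Nat.even_add, Nat.even_add_one] <;> ring

/-- Factorization of the big `-1` Jacobi polynomials for `β = -2N-1`:
`Q_{2N+1+m}(x; α, -2N-1, c) = (x²-c²)^N (x+c) Q_m(x; α, 2N+1, -c)`. -/
theorem bigQ_factorization_beta (N : ℕ) (hN : 1 ≤ N) (m : ℕ) (α c : ℂ)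
    (hc1 : c ≠ 1) (hc2 : c ≠ -1)
    (hden : ∀ n : ℕ, α - (2 * (N : ℂ) + 1) + 2 * n ≠ 0) :
    bigQ α (-2 * (N : ℂ) - 1) c (2 * N + 1 + m)
      = (X ^ 2 - C (c ^ 2)) ^ N * (X + C c) * bigQ α (2 * (N : ℂ) + 1) (-c) m := by
  have hs : ∀ n : ℕ, α + (-2 * (N : ℂ) - 1) + 2 * n ≠ 0 := by
    intro n h0
    apply hden n
    linear_combination h0
  have base := bigQ_base N α c hs
  induction m using Nat.strong_induction_on with
  | _ m ih =>
    match m, ih with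
    | 0, _ => simpa [bigQ] using base
    | 1, _ =>
      have hu : ucoef α (-2 * (N : ℂ) - 1) c (2 * N + 1) = 0 := by
        simp [ucoef, Nat.even_add_one]
      have hb := b_shift N 0 α c
      rw [add_zero] at hb
      rw [show 2 * N + 1 + 1 = 2 * N + 2 by ring, bigQ.eq_3, base, hu, hb, bigQ]
      simp
      ring
    | m + 2, ih =>
      have h0 := ih m (by omega)
      have h1 := ih (m + 1) (by omega)
      have hb := b_shift N (m + 1) α c
      have hu := u_shift N (m + 1) α c
      rw [← add_assoc] at h1 hb hu
      rw [← add_assoc, bigQ, h0, h1, hb, hu, bigQ]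
      ring
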